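/- Let (Δ, π) be a balanced simplicial complex of dimension d−1 over a field k. Then depth k[Δ] = min{ i + |S| : S ⊆ [d], H̃_{i−1}(Δ_{[d]−S}; k) ≠ 0 }, where Δ_{[d]−S} is the rank selected subcomplex obtained by removing the ranks in S. -/

import Mathlib

open Finset

/-- An abstract simplicial complex on vertex type `V`, given by a finite, downward closed
family of finite subsets of `V` (its faces). -/
structure SComplex (V : Type) [DecidableEq V] where
  faces : Finset (Finset V)
  down_closed : ∀ ⦃s t : Finset V⦄, s ∈ faces → t ⊆ s → t ∈ faces

namespace SComplex

variable {V : Type} [DecidableEq V]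

/-- `K.rank = d = dim k[Δ] = dim Δ + 1` is the maximal cardinality of a face of `K`. -/
def rank (K : SComplex V) : ℕ := K.faces.sup Finset.card

/-- `F` is a facet (maximal face) of `K`. -/
def IsFacet (K : SComplex V) (F : Finset V) : Prop :=
  F ∈ K.faces ∧ ∀ G ∈ K.faces, F ⊆ G → F = G

/-- `K` is pure: all facets have the maximal cardinality `K.rank`. -/
def Pure (K : SComplex V) : Prop := ∀ F : Finset V, K.IsFacet F → F.card = K.rank

/-- The link `lk_K(T) = {G ∈ K | T ∪ G ∈ K, T ∩ G = ∅}`. -/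
def link (K : SComplex V) (T : Finset V) : SComplex V where
  faces := K.faces.filter fun G => Disjoint T G ∧ T ∪ G ∈ K.faces
  down_closed := by
    intro s t hs hts
    simp only [Finset.mem_filter] at hs ⊢
    exact ⟨K.down_closed hs.1 hts, hs.2.1.mono_right hts,
      K.down_closed hs.2.2 (Finset.union_subset_union_right hts)⟩

/-- The anti-star `ast_K(T) = {G ∈ K | T ∩ G = ∅}`. -/
def antistar (K : SComplex V) (T : Finset V) : SComplex V where
  faces := K.faces.filter fun G => Disjoint T G
  down_closed := by
    intro s t hs hts
    simp only [Finset.mem_filter] at hs ⊢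
    exact ⟨K.down_closed hs.1 hts, hs.2.mono_right hts⟩

/-- The induced subcomplex of `K` on a set `W` of vertices. -/
def restrict (K : SComplex V) (W : Finset V) : SComplex V where
  faces := K.faces.filter fun G => G ⊆ W
  down_closed := by
    intro s t hs hts
    simp only [Finset.mem_filter] at hs ⊢
    exact ⟨K.down_closed hs.1 hts, hts.trans hs.2⟩

/-- The subcomplex of faces of cardinality at most `m`; as cardinality = dimension + 1, this is
the `(m-1)`-skeleton `Δ^{(m-1)}`. -/
def skelCard (K : SComplex V) (m : ℕ) : SComplex V where
  faces := K.faces.filter fun G => G.card ≤ m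
  down_closed := by
    intro s t hs hts
    simp only [Finset.mem_filter] at hs ⊢
    exact ⟨K.down_closed hs.1 hts, le_trans (Finset.card_le_card hts) hs.2⟩

/-- `K.trunc j` is `[Δ]_{>j}`, the order complex of the poset of faces of `K` of cardinality
(equivalently, of height in the face poset) `> j`: its faces are the chains of such faces.
For `j = 0` this is the barycentric subdivision of `K`. -/
def trunc (K : SComplex V) (j : ℕ) : SComplex (Finset V) where
  faces := K.faces.powerset.filter fun C =>
    (∀ s ∈ C, j < s.card) ∧ ∀ s ∈ C, ∀ t ∈ C, s ⊆ t ∨ t ⊆ s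
  down_closed := by
    intro s t hs hts
    simp only [Finset.mem_powerset, Finset.mem_filter] at hs ⊢
    exact ⟨hts.trans hs.1, fun a ha => hs.2.1 a (hts ha),
      fun a ha b hb => hs.2.2 a (hts ha) b (hts hb)⟩

/-- `Δ_A`: the complex obtained from `K` by deleting all faces containing a member of `A`. -/
def deleteAbove (K : SComplex V) (A : Finset (Finset V)) : SComplex V where
  faces := K.faces.filter fun s => ∀ τ ∈ A, ¬ τ ⊆ s
  down_closed := by
    intro s t hs hts
    simp only [Finset.mem_filter] at hs ⊢
    exact ⟨K.down_closed hs.1 hts, fun τ hτ hsub => hs.2 τ hτ (hsub.trans hts)⟩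

/-- The number of faces of `K` of cardinality `i`, i.e. the face number `f_{i-1}(K)`. -/
def faceCount (K : SComplex V) (i : ℕ) : ℕ := (K.faces.filter fun s => s.card = i).card

/-- The Euler characteristic `χ(K) = Σ_{i ≥ 0} (-1)^i f_i(K)`. -/
def eulerChar (K : SComplex V) : ℤ :=
  ∑ s ∈ K.faces.filter (fun s => s ≠ ∅), (-1 : ℤ) ^ (s.card - 1)

/-- The reduced Euler characteristic `χ̃(K) = χ(K) - 1`. -/
def reducedEulerChar (K : SComplex V) : ℤ := eulerChar K - 1

end SComplex

/-! ### Simplicial homology with coefficients in a field `k` -/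

/-- An arbitrary linear order on a finite type. -/
noncomputable def arbOrder (V : Type) [Fintype V] : LinearOrder V :=
  LinearOrder.lift' (Fintype.equivFin V) (Equiv.injective _)

namespace SComplex

variable {V : Type} [DecidableEq V]

/-- The faces of `K` of cardinality `n`, as a type. -/
def Faces (K : SComplex V) (n : ℕ) : Type :=
  {s : Finset V // s ∈ K.faces ∧ s.card = n}

/-- The space of reduced simplicial `n`-chains of `K`: formal `k`-linear combinations of the
faces of cardinality `n` (such a face has dimension `n - 1`; the empty face sits in degree `0`,
which produces *reduced* homology). -/
abbrev ChainsOf (k : Type) [Field k] (K : SComplex V) (n : ℕ) : Type := Faces K n →₀ k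

variable (k : Type) [Field k] [Fintype V]

/-- The simplicial boundary map, with signs determined by an arbitrary but fixed linear order
on the vertices. -/
noncomputable def bd (K : SComplex V) (n : ℕ) :
    ChainsOf k K n →ₗ[k] ChainsOf k K (n - 1) :=
  letI : LinearOrder V := arbOrder V
  Finsupp.lsum k fun s : Faces K n =>
    LinearMap.toSpanSingleton k (ChainsOf k K (n - 1))
      (∑ x ∈ s.1.attach,
        ((-1 : k) ^ (s.1.filter (fun y => y < x.1)).card) •
          Finsupp.single
            (⟨s.1.erase x.1,
              K.down_closed s.2.1 (Finset.erase_subset _ _),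
              by rw [Finset.card_erase_of_mem x.2, s.2.2]⟩ : Faces K (n - 1))
            (1 : k))

/-- `HVanish k K i` says that the reduced simplicial homology `H̃_{i-1}(K; k)` vanishes.
Note the indexing convention: the index `i` is the *cardinality* of the relevant faces, so this
is reduced homology in topological degree `i - 1`; e.g. `HVanish k K 1` says `H̃₀(K; k) = 0`
(`K` is connected and nonempty) and `HVanish k K 0` says `H̃₋₁(K; k) = 0` (`K` has a face).
Since the cycles in degree `i - 1` are `ker ∂ᵢ` and the boundaries are `im ∂ᵢ₊₁`, and the
boundaries are always contained in the cycles, vanishing of homology says exactly that every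
cycle is a boundary. -/
def HVanish (K : SComplex V) (i : ℕ) : Prop :=
  LinearMap.ker (bd k K i) ≤ LinearMap.range (bd k K (i + 1))

/-- `redHomologyRank k K i` is the dimension `dim_k H̃_{i-1}(K; k)` of the reduced simplicial
homology of `K` in topological degree `i - 1` (cardinality index `i`), namely the dimension of
the cycles `ker ∂ᵢ` modulo the boundaries `im ∂ᵢ₊₁`. -/
noncomputable def redHomologyRank (K : SComplex V) (i : ℕ) : ℕ :=
  Module.finrank k ↥(LinearMap.ker (bd k K i)) -
    Module.finrank k ↥(LinearMap.range (bd k K (i + 1)) ⊓ LinearMap.ker (bd k K i))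

end SComplex

/-! ### Depth, Serre conditions, and Stanley–Reisner rings -/

/-- The length of a longest regular sequence on `R` contained in the ideal `I`
(the `I`-depth of `R`). -/
noncomputable def depthIn (R : Type) [CommRing R] (I : Ideal R) : ℕ :=
  sSup {n : ℕ | ∃ rs : List R, rs.length = n ∧ (∀ r ∈ rs, r ∈ I) ∧
    RingTheory.Sequence.IsRegular R rs}

/-- Serre's condition `(S_ℓ)` for a commutative ring:
`depth R_p ≥ min {ℓ, dim R_p}` for every prime `p`. -/
def SerreCondS (ℓ : ℕ) (R : Type) [CommRing R] : Prop :=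
  ∀ (p : Ideal R) (hp : p.IsPrime),
    haveI := hp
    min ((ℓ : ℕ∞) : WithBot ℕ∞) (ringKrullDim (Localization.AtPrime p)) ≤
      ((depthIn (Localization.AtPrime p)
        (IsLocalRing.maximalIdeal (Localization.AtPrime p)) : ℕ∞) : WithBot ℕ∞)

namespace SComplex

variable {V : Type} [DecidableEq V] (k : Type) [Field k]

/-- The Stanley–Reisner ideal of `K`: generated by the squarefree monomials supported on
non-faces. -/
noncomputable def srIdeal (K : SComplex V) : Ideal (MvPolynomial V k) :=
  Ideal.span ((fun s : Finset V => ∏ v ∈ s, MvPolynomial.X v) '' {s : Finset V | s ∉ K.faces})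

/-- The Stanley–Reisner ring `k[Δ]`. -/
noncomputable abbrev SRRing (K : SComplex V) : Type := MvPolynomial V k ⧸ srIdeal k K

/-- `depth k[Δ]`: the depth of the Stanley–Reisner ring with respect to its irrelevant
(graded maximal) ideal. -/
noncomputable def srDepth (K : SComplex V) : ℕ :=
  depthIn (SRRing k K)
    (Ideal.span (Set.range fun v : V => Ideal.Quotient.mk (srIdeal k K) (MvPolynomial.X v)))

/-- `k[Δ]` satisfies Serre's condition `(S_ℓ)`. -/
def SerreS (ℓ : ℕ) (K : SComplex V) : Prop := SerreCondS ℓ (SRRing k K)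

end SComplex

/-! ### Order complexes of finite posets -/

/-- The order complex `O(P)` of a finite poset: its faces are the chains of `P`. -/
def orderComplex (P : Type) [DecidableEq P] [Fintype P] [PartialOrder P]
    [∀ a b : P, Decidable (a ≤ b)] : SComplex P where
  faces := Finset.univ.filter fun C : Finset P => ∀ a ∈ C, ∀ b ∈ C, a ≤ b ∨ b ≤ a
  down_closed := by
    intro s t hs hts
    simp only [Finset.mem_filter, Finset.mem_univ, true_and] at hs ⊢
    exact fun a ha b hb => hs a (hts ha) b (hts hb)

/-- The height of an element of a finite poset: the maximal cardinality of a chain with top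
element `p` (so minimal elements have height `1`). -/
def pheight {P : Type} [DecidableEq P] [Fintype P] [PartialOrder P]
    [∀ a b : P, Decidable (a ≤ b)] (p : P) : ℕ :=
  Finset.sup (Finset.univ.filter fun C : Finset P =>
    p ∈ C ∧ (∀ a ∈ C, a ≤ p) ∧ ∀ a ∈ C, ∀ b ∈ C, a ≤ b ∨ b ≤ a) Finset.card

/-- The height `ht P` of a finite poset: the maximal cardinality of a chain. -/
def pheightMax (P : Type) [DecidableEq P] [Fintype P] [PartialOrder P]
    [∀ a b : P, Decidable (a ≤ b)] : ℕ :=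
  Finset.univ.sup (pheight (P := P))

/-- `O(P_{>j})`: the full subcomplex of the order complex on the elements of height `> j`. -/
def ocAbove (P : Type) [DecidableEq P] [Fintype P] [PartialOrder P]
    [∀ a b : P, Decidable (a ≤ b)] (j : ℕ) : SComplex P :=
  (orderComplex P).restrict (Finset.univ.filter fun p => j < pheight p)

/-- The face poset `F(Δ)` of a simplicial complex: the nonempty faces, ordered by inclusion. -/
abbrev SComplex.FacePoset {V : Type} [DecidableEq V] (K : SComplex V) : Type :=
  {s : Finset V // s ∈ K.faces ∧ s ≠ ∅}

instance {V : Type} [DecidableEq V] (K : SComplex V) :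
    ∀ a b : K.FacePoset, Decidable (a ≤ b) := fun a b =>
  decidable_of_iff (a.1 ≤ b.1) Subtype.coe_le_coe

/-!
Let `θ_j ∈ k[Δ]` be the sum of the variables of colour `j`. Since `x_v * θ_{c v} = x_v ^ 2`, the
`θ_j` generate the irrelevant ideal up to radical, so the depth of `k[Δ]` is the least degree in
which their Koszul cohomology does not vanish. The complex is spanned by the cochains `x^a • e_U`
with `supp a ∈ Δ`. Dividing by the variables of colour `j` is a partial inverse of the
multiplication by `θ_j`, and the resulting homotopies contract away all of them except those where
`x^a = x_F` is squarefree and the colours of `F` lie in `U`. The differential does not change the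
set `S` of colours in `U` that do not occur in `F`, so what remains is a direct sum over `S` of the
simplicial cochain complexes of `Δ_{[d] - S}`, shifted by `|S|`.
-/

/-! ### Koszul cochains and depth -/

section Koszul

open RingTheory.Sequence
open scoped Pointwise

variable {ι : Type*} [LinearOrder ι]

/-- The sign `(-1)^{#{i ∈ U : i < j}}` with which `e_j ∧ e_{U \ {j}}` equals the wedge product
`e_U` of the `e_i`, `i ∈ U`, taken in increasing order. -/
def koszulSign (U : Finset ι) (j : ι) : ℤˣ := (-1) ^ #{i ∈ U | i < j}

lemma koszulSign_erase {U : Finset ι} {i : ι} (hi : i ∈ U) (j : ι) :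
    koszulSign (U.erase i) j = if i < j then -koszulSign U j else koszulSign U j := by
  unfold koszulSign
  rw [filter_erase]
  split_ifs with hij
  · rw [← card_erase_add_one (mem_filter.mpr ⟨hi, hij⟩), pow_succ, mul_neg_one, neg_neg]
  · rw [erase_eq_of_notMem (by simp [hij])]

lemma koszulSign_insert {U : Finset ι} {i : ι} (hi : i ∉ U) (j : ι) :
    koszulSign (insert i U) j = if i < j then -koszulSign U j else koszulSign U j := by
  have := koszulSign_erase (mem_insert_self i U) j
  rw [erase_insert hi] at this
  split_ifs at this ⊢ <;> simp [this]

lemma koszulSign_anticomm {U : Finset ι} {i j : ι} (hi : i ∈ U) (hj : j ∈ U) (hij : i ≠ j) :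
    koszulSign U i * koszulSign (U.erase i) j = -(koszulSign U j * koszulSign (U.erase j) i) := by
  rw [koszulSign_erase hi, koszulSign_erase hj]
  rcases hij.lt_or_gt with h | h
  · rw [if_pos h, if_neg h.not_gt, mul_neg, mul_comm]
  · rw [if_neg h.not_gt, if_pos h, mul_neg, neg_neg, mul_comm]

variable {R : Type*} [CommRing R] (θ : ι → R)

/-- The Koszul differential of the family `θ` with coefficients in `M`: left multiplication by
`∑ j, θ j • e_j`. The cochain `∑ U, f U • e_U` is encoded as the function `f`, so that cochains of
degree `p` are functions supported on sets of cardinality `p`; all degrees are kept together. -/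
def koszulD (M : Type*) [AddCommGroup M] [Module R M] :
    (Finset ι → M) →ₗ[R] (Finset ι → M) :=
  LinearMap.pi fun U => ∑ j ∈ U, koszulSign U j • θ j • LinearMap.proj (U.erase j)

variable {M : Type*} [AddCommGroup M] [Module R M]

lemma koszulD_apply (f : Finset ι → M) (U : Finset ι) :
    koszulD θ M f U = ∑ j ∈ U, koszulSign U j • θ j • f (U.erase j) := by
  simp [koszulD]

lemma koszulD_koszulD (f : Finset ι → M) : koszulD θ M (koszulD θ M f) = 0 := by
  ext U
  simp only [koszulD_apply, Finset.smul_sum, Pi.zero_apply]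
  rw [Finset.sum_sigma']
  refine Finset.sum_involution (fun a _ => ⟨a.2, a.1⟩) ?_ ?_ ?_ fun _ _ => rfl
  · rintro ⟨i, j⟩ h
    obtain ⟨hi, hji, hj⟩ : i ∈ U ∧ j ≠ i ∧ j ∈ U := by simpa using h
    have reorder (a b : ℤˣ) (x y : R) (m : M) : a • x • b • y • m = (a * b) • (x * y) • m := by
      rw [smul_comm x b, smul_smul, smul_smul]
    rw [Finset.erase_right_comm, reorder, reorder, koszulSign_anticomm hi hj hji.symm,
      mul_comm (θ j), Units.neg_smul, neg_add_cancel]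
  · rintro ⟨i, j⟩ h _ heq
    simp only [mem_sigma, mem_erase] at h
    exact h.2.1 (congrArg Sigma.fst heq)
  · rintro ⟨i, j⟩ h
    simp only [mem_sigma, mem_erase] at h ⊢
    exact ⟨h.2.2, h.2.1.symm, h.1⟩

lemma koszulD_congr {f g : Finset ι → M} {p : ℕ} (h : ∀ U, #U = p → f U = g U) {U : Finset ι}
    (hU : #U = p + 1) : koszulD θ M f U = koszulD θ M g U := by
  simp only [koszulD_apply]
  exact sum_congr rfl fun j hj => by rw [h _ (by rw [card_erase_of_mem hj, hU]; rfl)]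

lemma koszulD_map {N : Type*} [AddCommGroup N] [Module R N] (φ : M →ₗ[R] N) (f : Finset ι → M)
    (U : Finset ι) : koszulD θ N (φ ∘ f) U = φ (koszulD θ M f U) := by
  simp [koszulD_apply, Units.smul_def]

/-- Contraction of Koszul cochains with the dual basis vector of `e_j`. -/
def koszulContract (j : ι) (f : Finset ι → M) (U : Finset ι) : M :=
  if j ∈ U then 0 else koszulSign U j • f (insert j U)

lemma koszulContract_eq_zero {f : Finset ι → M} {p : ℕ} (hf : ∀ U, #U = p + 1 → f U = 0) (j : ι)
    {U : Finset ι} (hU : #U = p) : koszulContract j f U = 0 := by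
  rw [koszulContract]
  split_ifs with hj
  · rfl
  · rw [hf _ (by rw [card_insert_of_notMem hj, hU]), smul_zero]

lemma koszulD_koszulContract_of_mem {j : ι} (f : Finset ι → M) {U : Finset ι} (hj : j ∈ U) :
    koszulD θ M (koszulContract j f) U = θ j • f U := by
  rw [koszulD_apply, sum_eq_single_of_mem j hj fun i _ hij => by
    rw [koszulContract, if_pos (mem_erase.mpr ⟨hij.symm, hj⟩), smul_zero, smul_zero]]
  rw [koszulContract, if_neg (notMem_erase j U), koszulSign_erase hj, if_neg (lt_irrefl j),
    insert_erase hj, smul_comm (θ j), smul_smul, Int.units_mul_self, one_smul]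

/-- For `δ = id` this is the homotopy showing that `θ j` annihilates Koszul cohomology; for `δ` a
one-sided inverse of `θ j` it contracts the complex. -/
lemma koszulD_koszulContract_add {j : ι} {δ : M →+ M}
    (hδ : ∀ i ≠ j, ∀ m, δ (θ i • m) = θ i • δ m) (f : Finset ι → M) (U : Finset ι) :
    koszulD θ M (koszulContract j (δ ∘ f)) U + koszulContract j (δ ∘ koszulD θ M f) U =
      if j ∈ U then θ j • δ (f U) else δ (θ j • f U) := by
  split_ifs with hj
  · rw [koszulD_koszulContract_of_mem θ _ hj, koszulContract, if_pos hj, add_zero,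
      Function.comp_apply]
  · have hsign (i : ι) (hi : i ∈ U) : koszulSign U i * koszulSign (U.erase i) j =
        -(koszulSign U j * koszulSign (insert j U) i) := by
      rw [koszulSign_erase hi, koszulSign_insert hj]
      rcases (ne_of_mem_of_not_mem hi hj).lt_or_gt with h | h
      · rw [if_pos h, if_neg h.not_gt, mul_neg, mul_comm]
      · rw [if_neg h.not_gt, if_pos h, mul_neg, neg_neg, mul_comm]
    have hterm (i : ι) (hi : i ∈ U) :
        koszulSign U i • θ i • koszulContract j (δ ∘ f) (U.erase i) =
          -(koszulSign U j • koszulSign (insert j U) i • θ i • δ (f ((insert j U).erase i))) := by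
      have hij : i ≠ j := ne_of_mem_of_not_mem hi hj
      rw [koszulContract, if_neg fun h => hj (mem_of_mem_erase h), erase_insert_of_ne hij.symm,
        smul_comm (θ i), smul_smul, hsign i hi, Units.neg_smul, mul_smul, Function.comp_apply]
    have hδD : δ (koszulD θ M f (insert j U)) = koszulSign U j • δ (θ j • f U) +
        ∑ i ∈ U, koszulSign (insert j U) i • θ i • δ (f ((insert j U).erase i)) := by
      rw [koszulD_apply, sum_insert hj, erase_insert hj, koszulSign_insert hj,
        if_neg (lt_irrefl j), map_add, map_sum, Units.smul_def, map_zsmul, ← Units.smul_def]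
      congr 1
      refine sum_congr rfl fun i hi => ?_
      rw [Units.smul_def, map_zsmul, ← Units.smul_def, hδ i (ne_of_mem_of_not_mem hi hj)]
    rw [koszulContract, if_neg hj, Function.comp_apply, hδD, koszulD_apply, sum_congr rfl hterm,
      sum_neg_distrib, smul_add, smul_smul, Int.units_mul_self, one_smul, Finset.smul_sum]
    abel

/-- Vanishing of the `p`-th Koszul cohomology of the family `θ` on `M`. Both conditions only
involve the values of `f` and `g` on sets of cardinality `p` and `p - 1`, so that cochains need
not be supported in a single degree. -/
def KoszulVanish (M : Type*) [AddCommGroup M] [Module R M] (p : ℕ) : Prop :=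
  ∀ f : Finset ι → M, (∀ U, #U = p + 1 → koszulD θ M f U = 0) →
    ∃ g, ∀ U, #U = p → koszulD θ M g U = f U

variable {θ}

lemma exists_koszulD_eq_smul {r : R} (hr : r ∈ Ideal.span (Set.range θ)) {f : Finset ι → M} {p : ℕ}
    (hf : ∀ U, #U = p + 1 → koszulD θ M f U = 0) :
    ∃ g, ∀ U, #U = p → koszulD θ M g U = r • f U := by
  induction hr using Submodule.span_induction with
  | mem _ h =>
    obtain ⟨j, rfl⟩ := h
    refine ⟨koszulContract j f, fun U hU => ?_⟩
    simpa [koszulContract_eq_zero hf j hU] using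
      koszulD_koszulContract_add θ (j := j) (δ := AddMonoidHom.id M) (fun _ _ _ => rfl) f U
  | zero => exact ⟨0, by simp⟩
  | add r s _ _ hr hs =>
    obtain ⟨g, hg⟩ := hr
    obtain ⟨h, hh⟩ := hs
    exact ⟨g + h, fun U hU => by rw [map_add, Pi.add_apply, hg U hU, hh U hU, add_smul]⟩
  | smul a r _ hr =>
    obtain ⟨g, hg⟩ := hr
    exact ⟨a • g, fun U hU => by rw [map_smul, Pi.smul_apply, hg U hU, smul_eq_mul, mul_smul]⟩

lemma mkQ_smul_top_eq_zero_iff {x : R} {m : M} :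
    (x • (⊤ : Submodule R M)).mkQ m = 0 ↔ ∃ n, x • n = m := by
  simp [Submodule.mem_smul_pointwise_iff_exists]

lemma exists_koszulD_eq_of_smul {x : R} (hx : IsSMulRegular M x) {p : ℕ}
    (h : ∀ q, q + 1 = p → KoszulVanish θ (QuotSMulTop x M) q) {f g : Finset ι → M}
    (hg : ∀ U, #U = p → koszulD θ M g U = x • f U) :
    ∃ g', ∀ U, #U = p → koszulD θ M g' U = f U := by
  cases p with
  | zero =>
    refine ⟨0, fun U hU => ?_⟩
    obtain rfl := card_eq_zero.mp hU
    have := hg ∅ hU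
    rw [koszulD_apply, sum_empty] at this
    rw [map_zero, Pi.zero_apply, hx.right_eq_zero_of_smul this.symm]
  | succ q =>
    set π := (x • (⊤ : Submodule R M)).mkQ with hπ
    obtain ⟨h', hh'⟩ := h q rfl (π ∘ g) fun U hU => by
      rw [koszulD_map, hg U hU, hπ, mkQ_smul_top_eq_zero_iff]
      exact ⟨f U, rfl⟩
    obtain ⟨h, rfl : π ∘ h = h'⟩ := (Submodule.mkQ_surjective _).comp_left h'
    have hdiv (U) (hU : #U = q) : ∃ m, x • m = g U - koszulD θ M h U := by
      rw [← mkQ_smul_top_eq_zero_iff, ← hπ, map_sub, ← koszulD_map, hh' U hU,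
        Function.comp_apply, sub_self]
    choose! m hm using hdiv
    refine ⟨m, fun U hU => hx ?_⟩
    calc x • koszulD θ M m U = koszulD θ M (x • m) U := by rw [map_smul, Pi.smul_apply]
      _ = koszulD θ M (g - koszulD θ M h) U := koszulD_congr θ hm hU
      _ = x • f U := by rw [map_sub, koszulD_koszulD, sub_zero, hg U hU]

lemma KoszulVanish.of_quotSMulTop {x : R} (hx : IsSMulRegular M x)
    (hrad : x ∈ (Ideal.span (Set.range θ)).radical) {p : ℕ}
    (h : ∀ q, q + 1 = p → KoszulVanish θ (QuotSMulTop x M) q) : KoszulVanish θ M p := by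
  obtain ⟨n, hn⟩ := hrad
  intro f hf
  have descend (n : ℕ) : (∃ g, ∀ U, #U = p → koszulD θ M g U = x ^ n • f U) →
      ∃ g, ∀ U, #U = p → koszulD θ M g U = f U := by
    induction n with
    | zero => simp only [pow_zero, one_smul, imp_self]
    | succ n ih =>
      rintro ⟨g, hg⟩
      exact ih (exists_koszulD_eq_of_smul hx h fun U hU => by rw [hg U hU, pow_succ', mul_smul])
  exact descend n (exists_koszulD_eq_smul hn hf)

lemma KoszulVanish.quotSMulTop {x : R} (hx : IsSMulRegular M x) {p : ℕ}
    (h₀ : KoszulVanish θ M p) (h₁ : KoszulVanish θ M (p + 1)) :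
    KoszulVanish θ (QuotSMulTop x M) p := by
  intro f' hf'
  set π := (x • (⊤ : Submodule R M)).mkQ with hπ
  obtain ⟨f, rfl : π ∘ f = f'⟩ := (Submodule.mkQ_surjective _).comp_left f'
  have hdiv (U) (hU : #U = p + 1) : ∃ m, x • m = koszulD θ M f U := by
    rw [← mkQ_smul_top_eq_zero_iff, ← hπ, ← koszulD_map, hf' U hU]
  choose! m hm using hdiv
  obtain ⟨g, hg⟩ := h₁ m fun U hU => hx <| calc
    x • koszulD θ M m U = koszulD θ M (x • m) U := by rw [map_smul, Pi.smul_apply]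
    _ = koszulD θ M (koszulD θ M f) U := koszulD_congr θ hm hU
    _ = x • 0 := by rw [koszulD_koszulD, smul_zero, Pi.zero_apply]
  obtain ⟨h, hh⟩ := h₀ (f - x • g) fun U hU => by
    rw [map_sub, map_smul, Pi.sub_apply, Pi.smul_apply, hg U hU, hm U hU, sub_self]
  refine ⟨π ∘ h, fun U hU => ?_⟩
  rw [koszulD_map, hh U hU, Function.comp_apply, Pi.sub_apply, map_sub, sub_eq_self, hπ,
    mkQ_smul_top_eq_zero_iff]
  exact ⟨g U, rfl⟩

lemma koszulVanish_of_isWeaklyRegular (rs : List R)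
    (hrs : ∀ r ∈ rs, r ∈ (Ideal.span (Set.range θ)).radical) (M : Type*) [AddCommGroup M]
    [Module R M] (h : IsWeaklyRegular M rs) {p : ℕ} (hp : p < rs.length) : KoszulVanish θ M p := by
  induction rs generalizing M p with
  | nil => simp at hp
  | cons x rs ih =>
    rw [isWeaklyRegular_cons_iff] at h
    rw [List.forall_mem_cons] at hrs
    refine KoszulVanish.of_quotSMulTop h.1 hrs.1 fun q hq => ih hrs.2 _ h.2 ?_
    simpa [← hq] using hp

lemma KoszulVanish.eq_zero_of_smul_eq_zero (h : KoszulVanish θ M 0) {m : M}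
    (hm : ∀ j, θ j • m = 0) : m = 0 := by
  obtain ⟨g, hg⟩ := h (fun _ => m) fun U _ => by simp [koszulD_apply, hm]
  simpa [koszulD_apply] using (hg ∅ rfl).symm

lemma exists_isSMulRegular_of_koszulVanish [IsNoetherianRing R] [Module.Finite R M]
    (h : KoszulVanish θ M 0) : ∃ x ∈ Ideal.span (Set.range θ), IsSMulRegular M x := by
  have hsub : Subsingleton ((R ⧸ Ideal.span (Set.range θ)) →ₗ[R] M) := by
    refine subsingleton_of_forall_eq 0 fun φ => ?_
    have hφ : φ 1 = 0 := h.eq_zero_of_smul_eq_zero fun j => by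
      have hj : Ideal.Quotient.mk (Ideal.span (Set.range θ)) (θ j) = 0 :=
        Ideal.Quotient.eq_zero_iff_mem.mpr (Ideal.subset_span (Set.mem_range_self j))
      rw [← map_smul, Algebra.smul_def, Ideal.Quotient.algebraMap_eq, hj, zero_mul, map_zero]
    ext
    simpa using hφ
  obtain ⟨x, hx, hreg⟩ := IsSMulRegular.subsingleton_linearMap_iff.mp hsub
  exact ⟨x, by rwa [Ideal.annihilator_quotient] at hx, hreg⟩

lemma exists_isWeaklyRegular_of_koszulVanish [IsNoetherianRing R] (n : ℕ)
    (M : Type*) [AddCommGroup M] [Module R M] [Module.Finite R M]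
    (h : ∀ p < n, KoszulVanish θ M p) :
    ∃ rs : List R, rs.length = n ∧ (∀ r ∈ rs, r ∈ Ideal.span (Set.range θ)) ∧
      IsWeaklyRegular M rs := by
  induction n generalizing M with
  | zero => exact ⟨[], rfl, by simp, by simp⟩
  | succ n ih =>
    obtain ⟨x, hx, hreg⟩ := exists_isSMulRegular_of_koszulVanish (h 0 n.succ_pos)
    obtain ⟨rs, hlen, hmem, hrs⟩ := ih (QuotSMulTop x M) fun p hp =>
      KoszulVanish.quotSMulTop hreg (h p (by omega)) (h (p + 1) (by omega))
    exact ⟨x :: rs, by rw [List.length_cons, hlen], List.forall_mem_cons.mpr ⟨hx, hmem⟩,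
      (isWeaklyRegular_cons_iff M x rs).mpr ⟨hreg, hrs⟩⟩

lemma not_koszulVanish_card [Fintype ι] (hθ : Ideal.span (Set.range θ) ≠ ⊤) :
    ¬ KoszulVanish θ R (Fintype.card ι) := by
  intro h
  obtain ⟨g, hg⟩ := h 1 fun U hU => absurd U.card_le_univ (by omega)
  refine hθ ((Ideal.eq_top_iff_one _).mpr ?_)
  rw [← show koszulD θ R g univ = 1 from hg univ card_univ, koszulD_apply]
  refine Ideal.sum_mem _ fun j _ => ?_
  rw [Units.smul_def]
  exact zsmul_mem (Ideal.mul_mem_right _ _ (Ideal.subset_span (Set.mem_range_self j))) _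

lemma depthIn_eq_sInf_koszulVanish {R : Type} [CommRing R] {θ : ι → R} [Finite ι]
    [IsNoetherianRing R] {I : Ideal R} (hI : I ≠ ⊤)
    (hθ : ∀ j, θ j ∈ I) (hrad : I ≤ (Ideal.span (Set.range θ)).radical) :
    depthIn R I = sInf {p | ¬ KoszulVanish θ R p} := by
  have := Fintype.ofFinite ι
  have hle : Ideal.span (Set.range θ) ≤ I := Ideal.span_le.mpr (Set.range_subset_iff.mpr hθ)
  have hne : {p | ¬ KoszulVanish θ R p}.Nonempty :=
    ⟨_, not_koszulVanish_card (ne_top_of_le_ne_top hI hle)⟩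
  refine IsGreatest.csSup_eq ⟨?_, ?_⟩
  · obtain ⟨rs, hlen, hmem, hrs⟩ := exists_isWeaklyRegular_of_koszulVanish (θ := θ)
      (sInf {p | ¬ KoszulVanish θ R p}) R fun p hp => not_not.mp (Nat.notMem_of_lt_sInf hp)
    refine ⟨rs, hlen, fun r hr => hle (hmem r hr), hrs, fun h => hI ?_⟩
    rw [smul_eq_mul, Ideal.mul_top] at h
    rw [eq_top_iff, h]
    exact Ideal.span_le.mpr fun r hr => hle (hmem r hr)
  · rintro n ⟨rs, rfl, hmem, hrs⟩
    by_contra! hlt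
    exact Nat.sInf_mem hne
      (koszulVanish_of_isWeaklyRegular rs (fun r hr => hrad (hmem r hr)) R
        hrs.toIsWeaklyRegular hlt)

end Koszul

/-! ### Simplicial cochains -/

namespace SComplex

section Cochains

variable {V : Type} [DecidableEq V] {k : Type} [Field k]

/-- The simplicial coboundary with incidence numbers `s F v = [F : F \ {v}]`. Cochains are
functions on all finite sets, of which only the values on faces matter. -/
def coboundary (s : Finset V → V → ℤˣ) (φ : Finset V → k) (F : Finset V) : k :=
  ∑ v ∈ F, s F v • φ (F.erase v)

variable (k) in
/-- Vanishing of the reduced simplicial cohomology of `K` in cardinality degree `i`, computed with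
the incidence numbers `s`. -/
def CochainVanish (K : SComplex V) (s : Finset V → V → ℤˣ) (i : ℕ) : Prop :=
  ∀ φ : Finset V → k, (∀ F ∈ K.faces, #F = i + 1 → coboundary s φ F = 0) →
    ∃ ψ, ∀ F ∈ K.faces, #F = i → coboundary s ψ F = φ F

/-- `s` is a system of incidence numbers on `K`: its coboundary squares to zero. -/
def IsIncidence (K : SComplex V) (s : Finset V → V → ℤˣ) : Prop :=
  ∀ F ∈ K.faces, ∀ v ∈ F, ∀ w ∈ F, v ≠ w →
    s F v * s (F.erase v) w = -(s F w * s (F.erase w) v)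

variable {K : SComplex V} {s t : Finset V → V → ℤˣ}

lemma IsIncidence.rescaling_eq (hs : IsIncidence K s) (ht : IsIncidence K t) {σ : Finset V → ℤˣ}
    {F : Finset V} (hF : F ∈ K.faces) (hσ : ∀ v ∈ F, ∀ w ∈ F.erase v,
      σ (F.erase v) = s (F.erase v) w * t (F.erase v) w * σ ((F.erase v).erase w))
    {v w : V} (hv : v ∈ F) (hw : w ∈ F) :
    s F v * t F v * σ (F.erase v) = s F w * t F w * σ (F.erase w) := by
  obtain rfl | hvw := eq_or_ne v w
  · rfl
  have expand (x) (hx : x ∈ F) (y) (hy : y ∈ F.erase x) :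
      s F x * t F x * σ (F.erase x) = (s F x * s (F.erase x) y) * (t F x * t (F.erase x) y) *
        σ ((F.erase x).erase y) := by
    rw [hσ x hx y hy]
    ac_rfl
  rw [expand v hv w (mem_erase.mpr ⟨hvw.symm, hw⟩), expand w hw v (mem_erase.mpr ⟨hvw, hv⟩),
    hs F hF v hv w hw hvw, ht F hF v hv w hw hvw, neg_mul_neg, erase_right_comm]

/-- The scaling factor of a face is built up one vertex at a time; anticommutation makes it
independent of the order of the vertices. -/
lemma IsIncidence.exists_rescaling (hs : IsIncidence K s) (ht : IsIncidence K t) :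
    ∃ σ : Finset V → ℤˣ, ∀ F ∈ K.faces, ∀ v ∈ F, σ F = s F v * t F v * σ (F.erase v) := by
  suffices h : ∀ n, ∃ σ : Finset V → ℤˣ,
      ∀ F ∈ K.faces, #F ≤ n → ∀ v ∈ F, σ F = s F v * t F v * σ (F.erase v) by
    obtain ⟨σ, hσ⟩ := h (K.faces.sup card)
    exact ⟨σ, fun F hF => hσ F hF (le_sup (f := card) hF)⟩
  intro n
  induction n with
  | zero => exact ⟨1, fun F _ hF v hv => absurd hF (card_pos.mpr ⟨v, hv⟩).not_ge⟩
  | succ n ih =>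
    obtain ⟨σ, hσ⟩ := ih
    have card_erase_le {F : Finset V} {v : V} (hv : v ∈ F) (hF : #F ≤ n + 1) :
        #(F.erase v) ≤ n := by
      rw [card_erase_of_mem hv]
      omega
    have extend (F : Finset V) : ∃ e : ℤˣ, (#F ≤ n → e = σ F) ∧
        (F ∈ K.faces → #F ≤ n + 1 → ∀ v ∈ F, e = s F v * t F v * σ (F.erase v)) := by
      by_cases hle : #F ≤ n
      · exact ⟨σ F, fun _ => rfl, fun hF _ => hσ F hF hle⟩
      obtain ⟨w, hw⟩ := card_pos.mp (Nat.zero_lt_of_lt (not_le.mp hle))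
      refine ⟨s F w * t F w * σ (F.erase w), fun h => absurd h hle, fun hF hcard v hv => ?_⟩
      exact hs.rescaling_eq ht hF (fun x hx => hσ _ (K.down_closed hF (erase_subset x F))
        (card_erase_le hx hcard)) hw hv
    choose τ hτσ hτ using extend
    exact ⟨τ, fun F hF hcard v hv => by rw [hτσ _ (card_erase_le hv hcard), hτ F hF hcard v hv]⟩

lemma CochainVanish.of_isIncidence (hs : IsIncidence K s) (ht : IsIncidence K t) {i : ℕ}
    (h : CochainVanish k K s i) : CochainVanish k K t i := by
  obtain ⟨σ, hσ⟩ := hs.exists_rescaling ht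
  have cob (φ : Finset V → k) (F : Finset V) (hF : F ∈ K.faces) :
      coboundary t (fun G => σ G • φ G) F = σ F • coboundary s φ F := by
    rw [coboundary, coboundary, Finset.smul_sum]
    refine sum_congr rfl fun v hv => ?_
    have hsign : t F v * σ (F.erase v) = σ F * s F v := by
      rw [hσ F hF v hv, mul_right_comm, mul_right_comm (s F v), Int.units_mul_self, one_mul]
    rw [smul_smul, smul_smul, hsign]
  have smul_smul_self (φ : Finset V → k) : (fun G => σ G • σ G • φ G) = φ :=
    funext fun G => by rw [smul_smul, Int.units_mul_self, one_smul]
  intro φ hφ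
  obtain ⟨ψ, hψ⟩ := h (fun G => σ G • φ G) fun F hF hcard => by
    rw [← smul_eq_zero_iff_eq (σ F), ← cob _ F hF, smul_smul_self, hφ F hF hcard]
  refine ⟨fun G => σ G • ψ G, fun F hF hcard => ?_⟩
  rw [cob ψ F hF, hψ F hF hcard]
  exact congrFun (smul_smul_self φ) F

variable [Fintype V]

/-- The incidence numbers used by the boundary map `bd`. -/
noncomputable def vertexSign (F : Finset V) (v : V) : ℤˣ :=
  letI := arbOrder V
  koszulSign F v

lemma isIncidence_vertexSign : IsIncidence K vertexSign := by
  intro F _ v hv w hw hvw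
  let _ := arbOrder V
  have h := koszulSign_anticomm hv hw hvw
  unfold vertexSign
  convert h

omit [Fintype V]

variable (k) in
/-- A face of cardinality `n`, as a basis element of the space of chains. -/
noncomputable def faceChain {n : ℕ} (F : Finset V) (hF : F ∈ K.faces ∧ #F = n) : ChainsOf k K n :=
  Finsupp.single ⟨F, hF⟩ 1

lemma dual_ext {n : ℕ} {l m : Module.Dual k (ChainsOf k K n)}
    (h : ∀ F (hF : F ∈ K.faces ∧ #F = n), l (faceChain k F hF) = m (faceChain k F hF)) : l = m :=
  Finsupp.lhom_ext' fun F => LinearMap.ext_ring (h F.1 F.2)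

variable (K) in
/-- The linear form on chains given by a cochain. -/
noncomputable def cochainDual (n : ℕ) (φ : Finset V → k) : Module.Dual k (ChainsOf k K n) :=
  Finsupp.linearCombination k fun F : Faces K n => φ (Subtype.val F)

lemma cochainDual_faceChain {n : ℕ} (φ : Finset V → k) {F : Finset V}
    (hF : F ∈ K.faces ∧ #F = n) : cochainDual K n φ (faceChain k F hF) = φ F :=
  (Finsupp.linearCombination_single ..).trans (one_smul _ _)

lemma cochainDual_eq_iff {n : ℕ} {φ ψ : Finset V → k} :
    cochainDual K n φ = cochainDual K n ψ ↔ ∀ F ∈ K.faces, #F = n → φ F = ψ F := by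
  constructor
  · intro h F hF hcard
    rw [← cochainDual_faceChain φ ⟨hF, hcard⟩, h, cochainDual_faceChain]
  · intro h
    refine dual_ext fun F hF => ?_
    rw [cochainDual_faceChain, cochainDual_faceChain, h F hF.1 hF.2]

lemma cochainDual_surjective (n : ℕ) :
    Function.Surjective (cochainDual (k := k) K n) := by
  intro l
  refine ⟨fun F => if h : F ∈ K.faces ∧ #F = n then l (faceChain k F h) else 0,
    dual_ext fun F hF => ?_⟩
  rw [cochainDual_faceChain, dif_pos hF]

variable [Fintype V]

lemma bd_faceChain {n : ℕ} {F : Finset V} (hF : F ∈ K.faces ∧ #F = n) :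
    bd k K n (faceChain k F hF) = ∑ v ∈ F.attach, vertexSign F v.1 •
      faceChain k (F.erase v.1) ⟨K.down_closed hF.1 (erase_subset _ _),
        by rw [card_erase_of_mem v.2, hF.2]⟩ := by
  refine (Finsupp.lsum_single ..).trans ((one_smul _ _).trans (sum_congr rfl fun v _ => ?_))
  rw [Units.smul_def, ← Int.cast_smul_eq_zsmul k]
  simp only [vertexSign, koszulSign, Units.val_pow_eq_pow_val, Units.val_neg, Units.val_one,
    Int.cast_pow, Int.cast_neg, Int.cast_one]
  rfl

lemma dualMap_bd_cochainDual {n : ℕ} (φ : Finset V → k) :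
    (bd k K n).dualMap (cochainDual K (n - 1) φ) = cochainDual K n (coboundary vertexSign φ) := by
  refine dual_ext fun F hF => ?_
  rw [LinearMap.dualMap_apply, bd_faceChain, cochainDual_faceChain, map_sum, coboundary,
    ← sum_attach F]
  refine sum_congr rfl fun v _ => ?_
  rw [Units.smul_def, map_zsmul, cochainDual_faceChain, Units.smul_def]

/-- Over a field, exactness at a spot of the chain complex is exactness of the dual complex. -/
lemma hVanish_iff_cochainVanish {i : ℕ} : HVanish k K i ↔ CochainVanish k K vertexSign i := by
  have hdual : HVanish k K i ↔
      LinearMap.ker (bd k K (i + 1)).dualMap ≤ LinearMap.range (bd k K i).dualMap := by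
    rw [LinearMap.range_dualMap_eq_dualAnnihilator_ker,
      LinearMap.ker_dualMap_eq_dualAnnihilator_range]
    exact (Subspace.dualAnnihilator_le_dualAnnihilator_iff (W := LinearMap.range _)).symm
  have hcocycle (φ : Finset V → k) :
      (bd k K (i + 1)).dualMap (cochainDual K i φ) = 0 ↔
        ∀ F ∈ K.faces, #F = i + 1 → coboundary vertexSign φ F = 0 := by
    have hzero : cochainDual K (i + 1) (0 : Finset V → k) = 0 :=
      dual_ext fun F hF => cochainDual_faceChain 0 hF
    rw [← hzero]
    exact (Eq.congr_left (dualMap_bd_cochainDual φ)).trans cochainDual_eq_iff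
  rw [hdual]
  refine (cochainDual_surjective i).forall.trans (forall_congr' fun φ => imp_congr (hcocycle φ) ?_)
  rw [LinearMap.mem_range, (cochainDual_surjective (i - 1)).exists]
  simp only [dualMap_bd_cochainDual, cochainDual_eq_iff]

end Cochains

end SComplex

/-! ### Coefficients in Stanley–Reisner rings -/

namespace SComplex

open MvPolynomial

section Coefficients

variable {V : Type}

/-- The exponent vector of the squarefree monomial supported on `F`. -/
noncomputable def sqfree (F : Finset V) : V →₀ ℕ := Finsupp.indicator F fun _ _ => 1

lemma sqfree_apply [DecidableEq V] (F : Finset V) (v : V) :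
    sqfree F v = if v ∈ F then 1 else 0 := by
  simp [sqfree, Finsupp.indicator_apply]

@[simp]
lemma support_sqfree (F : Finset V) : (sqfree F).support = F := by
  classical
  ext v
  simp [sqfree_apply]

lemma sqfree_sub_single [DecidableEq V] (F : Finset V) (v : V) :
    sqfree F - Finsupp.single v 1 = sqfree (F.erase v) := by
  ext w
  rw [Finsupp.tsub_apply, sqfree_apply, sqfree_apply, Finsupp.single_apply]
  grind

lemma sqfree_le_iff {F : Finset V} {a : V →₀ ℕ} : sqfree F ≤ a ↔ F ⊆ a.support := by
  classical
  refine forall_congr' fun v => ?_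
  rw [sqfree_apply, Finsupp.mem_support_iff]
  grind

lemma sqfree_eq_iff {F : Finset V} {a : V →₀ ℕ} :
    sqfree F = a ↔ F = a.support ∧ ∀ v ∈ a.support, a v = 1 := by
  classical
  constructor
  · rintro rfl
    exact ⟨(support_sqfree F).symm, fun v hv => by
      rw [support_sqfree] at hv
      rw [sqfree_apply, if_pos hv]⟩
  · rintro ⟨rfl, ha⟩
    ext v
    rw [sqfree_apply]
    split_ifs with hv
    · exact (ha v hv).symm
    · exact (Finsupp.notMem_support_iff.mp hv).symm

lemma support_add_single {a : V →₀ ℕ} {w : V} (hw : w ∈ a.support) :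
    (a + Finsupp.single w 1).support = a.support := by
  classical
  ext v
  simp only [Finsupp.mem_support_iff, Finsupp.add_apply, Finsupp.single_apply] at hw ⊢
  grind

variable {k : Type} [Field k]

lemma prod_X_eq_monomial_sqfree (F : Finset V) :
    ∏ v ∈ F, (X v : MvPolynomial V k) = monomial (sqfree F) 1 := by
  classical
  rw [monomial_eq, C_1, one_mul, Finsupp.prod, support_sqfree]
  exact prod_congr rfl fun v hv => by rw [sqfree_apply, if_pos hv, pow_one]

variable [DecidableEq V] {K : SComplex V}

lemma mem_srIdeal_iff {p : MvPolynomial V k} :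
    p ∈ srIdeal k K ↔ ∀ a : V →₀ ℕ, a.support ∈ K.faces → p.coeff a = 0 := by
  have hspan : srIdeal k K = Ideal.span ((fun a => monomial a (1 : k)) ''
      (sqfree '' {F : Finset V | F ∉ K.faces})) := by
    rw [srIdeal, Set.image_image]
    simp only [prod_X_eq_monomial_sqfree]
  simp only [hspan, mem_ideal_span_monomial_image, Set.exists_mem_image, mem_support_iff,
    sqfree_le_iff]
  refine forall_congr' fun a => ⟨fun h ha => ?_, fun h ha => ⟨_, mt h ha, Subset.rfl⟩⟩
  by_contra h0
  obtain ⟨F, hF, hFa⟩ := h h0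
  exact hF (K.down_closed ha hFa)

/-- The coefficient of the monomial with exponent `a` in an element of the Stanley–Reisner ring;
it is zero by convention when the support of `a` is not a face. -/
noncomputable def srCoeff (a : V →₀ ℕ) : SRRing k K →ₗ[k] k :=
  if ha : a.support ∈ K.faces then
    Submodule.liftQ ((srIdeal k K).restrictScalars k) (lcoeff k a)
      (fun _ hp => mem_srIdeal_iff.mp hp a ha) ∘ₗ
        (Submodule.Quotient.restrictScalarsEquiv k (srIdeal k K)).symm.toLinearMap
  else 0

lemma srCoeff_mk {a : V →₀ ℕ} (ha : a.support ∈ K.faces) (p : MvPolynomial V k) :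
    srCoeff a (Ideal.Quotient.mk (srIdeal k K) p) = p.coeff a := by
  rw [srCoeff, dif_pos ha]
  rfl

lemma srCoeff_ext {r s : SRRing k K}
    (h : ∀ a : V →₀ ℕ, a.support ∈ K.faces → srCoeff a r = srCoeff a s) : r = s := by
  obtain ⟨p, rfl⟩ := Ideal.Quotient.mk_surjective r
  obtain ⟨q, rfl⟩ := Ideal.Quotient.mk_surjective s
  rw [Ideal.Quotient.eq, mem_srIdeal_iff]
  intro a ha
  rw [coeff_sub, ← srCoeff_mk ha, ← srCoeff_mk ha, h a ha, sub_self]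

lemma support_sub_single_mem_faces {a : V →₀ ℕ} (ha : a.support ∈ K.faces) (v : V) :
    (a - Finsupp.single v 1).support ∈ K.faces :=
  K.down_closed ha (Finsupp.support_mono tsub_le_self)

lemma srCoeff_X_mul {a : V →₀ ℕ} (ha : a.support ∈ K.faces) (v : V) (r : SRRing k K) :
    srCoeff a (Ideal.Quotient.mk (srIdeal k K) (X v) * r) =
      if v ∈ a.support then srCoeff (a - Finsupp.single v 1) r else 0 := by
  obtain ⟨p, rfl⟩ := Ideal.Quotient.mk_surjective r
  rw [← map_mul, srCoeff_mk ha, srCoeff_mk (support_sub_single_mem_faces ha v), coeff_X_mul']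

end Coefficients

section ColorSum

variable {V : Type} [DecidableEq V] [Fintype V] {k : Type} [Field k] {K : SComplex V}
  {ι : Type*} [LinearOrder ι] {c : V → ι}

variable (k K c) in
/-- The sum `θ_j` of the variables of colour `j` in `k[Δ]`. -/
noncomputable def colorSum (j : ι) : SRRing k K :=
  ∑ v with c v = j, Ideal.Quotient.mk (srIdeal k K) (X v)

lemma srCoeff_colorSum_mul {a : V →₀ ℕ} (ha : a.support ∈ K.faces) (j : ι) (r : SRRing k K) :
    srCoeff a (colorSum k K c j * r) =
      ∑ v ∈ a.support with c v = j, srCoeff (a - Finsupp.single v 1) r := by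
  simp only [colorSum, sum_mul, map_sum, srCoeff_X_mul ha]
  rw [← sum_filter, filter_filter]
  exact sum_congr (by ext; simp [and_comm]) fun _ _ => rfl

lemma srCoeff_koszulD {a : V →₀ ℕ} (ha : a.support ∈ K.faces) (f : Finset ι → SRRing k K)
    (U : Finset ι) :
    srCoeff a (koszulD (colorSum k K c) _ f U) = ∑ v ∈ a.support with c v ∈ U,
      koszulSign U (c v) • srCoeff (a - Finsupp.single v 1) (f (U.erase (c v))) := by
  simp only [koszulD_apply, map_sum, Units.smul_def, map_zsmul, smul_eq_mul,
    srCoeff_colorSum_mul ha, Finset.smul_sum]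
  rw [← sum_fiberwise_of_maps_to (s := a.support.filter (c · ∈ U)) (t := U) (g := c)
    fun v hv => (mem_filter.mp hv).2]
  refine sum_congr rfl fun j hj => sum_congr ?_ fun v hv => by rw [(mem_filter.mp hv).2]
  grind

lemma srCoeff_sqfree_koszulD {F : Finset V} (hF : F ∈ K.faces) (f : Finset ι → SRRing k K)
    {U : Finset ι} (hU : F.image c ⊆ U) :
    srCoeff (sqfree F) (koszulD (colorSum k K c) _ f U) =
      ∑ v ∈ F, koszulSign U (c v) • srCoeff (sqfree (F.erase v)) (f (U.erase (c v))) := by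
  rw [srCoeff_koszulD (by rwa [support_sqfree]), support_sqfree,
    filter_true_of_mem fun v hv => hU (mem_image_of_mem c hv)]
  simp only [sqfree_sub_single]

omit [Fintype V] in
lemma exists_colorDiv [Finite V] (j : ι) : ∃ δ : SRRing k K →+ SRRing k K, ∀ a : V →₀ ℕ,
    a.support ∈ K.faces → ∀ r, srCoeff a (δ r) =
      ∑ w ∈ a.support with c w = j, srCoeff (a + Finsupp.single w 1) r := by
  have := Fintype.ofFinite V
  have hδ (r : SRRing k K) : ∃ r' : SRRing k K, ∀ a : V →₀ ℕ, a.support ∈ K.faces →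
      srCoeff a r' = ∑ w ∈ a.support with c w = j, srCoeff (a + Finsupp.single w 1) r := by
    obtain ⟨p, rfl⟩ := Ideal.Quotient.mk_surjective r
    refine ⟨∑ w with c w = j, Ideal.Quotient.mk (srIdeal k K)
      (X w * p.divMonomial (Finsupp.single w 2)), fun a ha => ?_⟩
    have hcoeff (w : V) (hw : w ∈ a.support) :
        coeff (Finsupp.single w 2 + (a - Finsupp.single w 1)) p =
          srCoeff (a + Finsupp.single w 1) (Ideal.Quotient.mk (srIdeal k K) p) := by
      rw [srCoeff_mk (by rwa [support_add_single hw])]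
      congr 1
      ext v
      simp only [Finsupp.mem_support_iff, Finsupp.add_apply, Finsupp.tsub_apply,
        Finsupp.single_apply] at hw ⊢
      grind
    simp only [map_sum, srCoeff_mk ha, coeff_X_mul', coeff_divMonomial]
    rw [← sum_filter, filter_filter]
    exact sum_congr (by ext; simp [and_comm]) fun w hw => hcoeff w (mem_filter.mp hw).1
  choose δ hδ using hδ
  refine ⟨AddMonoidHom.mk' δ fun r s => srCoeff_ext fun a ha => ?_, fun a ha r => hδ r a ha⟩
  simp only [map_add, hδ _ a ha, sum_add_distrib]

variable (k K c) in
/-- The additive map `δ_j` on `k[Δ]` used as a partial inverse of the multiplication by `θ_j`: it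
divides by `x_w` the monomials divisible by `x_w ^ 2` for a variable `x_w` of colour `j`, and kills
all other monomials. -/
noncomputable def colorDiv (j : ι) : SRRing k K →+ SRRing k K :=
  (exists_colorDiv (c := c) j).choose

lemma srCoeff_colorDiv {a : V →₀ ℕ} (ha : a.support ∈ K.faces) (j : ι) (r : SRRing k K) :
    srCoeff a (colorDiv k K c j r) =
      ∑ w ∈ a.support with c w = j, srCoeff (a + Finsupp.single w 1) r :=
  (exists_colorDiv j).choose_spec a ha r

lemma colorDiv_colorSum_mul {i j : ι} (hij : i ≠ j) (r : SRRing k K) :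
    colorDiv k K c j (colorSum k K c i * r) = colorSum k K c i * colorDiv k K c j r := by
  refine srCoeff_ext fun a ha => ?_
  have hmul (w : V) (hw : w ∈ a.support) :
      srCoeff (a + Finsupp.single w 1) (colorSum k K c i * r) =
        ∑ v ∈ a.support with c v = i, srCoeff (a + Finsupp.single w 1 - Finsupp.single v 1) r := by
    rw [srCoeff_colorSum_mul (by rwa [support_add_single hw]), support_add_single hw]
  have hdiv (v : V) (hv : c v = i) : srCoeff (a - Finsupp.single v 1) (colorDiv k K c j r) =
      ∑ w ∈ a.support with c w = j, srCoeff (a - Finsupp.single v 1 + Finsupp.single w 1) r := by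
    rw [srCoeff_colorDiv (support_sub_single_mem_faces ha v)]
    refine sum_congr ?_ fun _ _ => rfl
    ext w
    simp only [mem_filter, Finsupp.mem_support_iff, Finsupp.tsub_apply, Finsupp.single_apply]
    grind
  rw [srCoeff_colorDiv ha, srCoeff_colorSum_mul ha,
    sum_congr rfl fun w hw => hmul w (mem_filter.mp hw).1,
    sum_congr rfl fun v hv => hdiv v (mem_filter.mp hv).2, sum_comm]
  refine sum_congr rfl fun v hv => sum_congr rfl fun w _ => ?_
  rw [tsub_add_eq_add_tsub]
  exact Finsupp.single_le_iff.mpr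
    (Nat.one_le_iff_ne_zero.mpr (Finsupp.mem_support_iff.mp (mem_filter.mp hv).1))

omit [DecidableEq V] [Fintype V] in
lemma filter_color_eq_singleton {F : Finset V} (hF : Set.InjOn c F) {v : V} (hv : v ∈ F) :
    F.filter (c · = c v) = {v} := by
  ext w
  rw [mem_filter, mem_singleton]
  exact ⟨fun h => hF h.1 hv h.2, by rintro rfl; exact ⟨hv, rfl⟩⟩

lemma srCoeff_colorDiv_colorSum_mul (hc : ∀ F ∈ K.faces, Set.InjOn c F) {a : V →₀ ℕ}
    (ha : a.support ∈ K.faces) (j : ι) (r : SRRing k K) :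
    srCoeff a (colorDiv k K c j (colorSum k K c j * r)) =
      if ∀ v ∈ a.support, c v ≠ j then 0 else srCoeff a r := by
  rw [srCoeff_colorDiv ha]
  split_ifs with h
  · rw [filter_false_of_mem h, sum_empty]
  · push Not at h
    obtain ⟨v, hv, rfl⟩ := h
    have hcolor := filter_color_eq_singleton (hc _ ha) hv
    rw [hcolor, sum_singleton, srCoeff_colorSum_mul (by rwa [support_add_single hv]),
      support_add_single hv, hcolor, sum_singleton, add_tsub_cancel_right]

lemma srCoeff_colorSum_mul_colorDiv (hc : ∀ F ∈ K.faces, Set.InjOn c F) {a : V →₀ ℕ}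
    (ha : a.support ∈ K.faces) (j : ι) (r : SRRing k K) :
    srCoeff a (colorSum k K c j * colorDiv k K c j r) =
      if ∀ v ∈ a.support, c v = j → a v = 1 then 0 else srCoeff a r := by
  by_cases h : ∀ v ∈ a.support, c v ≠ j
  · rw [if_pos fun v hv hj => absurd hj (h v hv), srCoeff_colorSum_mul ha, filter_false_of_mem h,
      sum_empty]
  push Not at h
  obtain ⟨v, hv, rfl⟩ := h
  have heq : ∀ w ∈ a.support, c w = c v → w = v := fun w hw hwv => hc _ ha hw hv hwv
  have hiff : (∀ w ∈ a.support, c w = c v → a w = 1) ↔ a v = 1 :=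
    ⟨fun h => h v hv rfl, fun h w hw hwv => by rwa [heq w hw hwv]⟩
  have hsub : ((a - Finsupp.single v 1).support.filter (c · = c v)) =
      if a v = 1 then ∅ else {v} := by
    ext w
    rw [Finsupp.mem_support_iff] at hv
    simp only [Finsupp.mem_support_iff] at heq
    simp only [mem_filter, Finsupp.mem_support_iff, Finsupp.tsub_apply, Finsupp.single_apply]
    grind
  rw [srCoeff_colorSum_mul ha, filter_color_eq_singleton (hc _ ha) hv, sum_singleton,
    srCoeff_colorDiv (support_sub_single_mem_faces ha v), hsub]
  simp only [hiff]
  split_ifs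
  · rw [sum_empty]
  · rw [sum_singleton, tsub_add_cancel_of_le]
    exact Finsupp.single_le_iff.mpr (Nat.one_le_iff_ne_zero.mpr (Finsupp.mem_support_iff.mp hv))

/-- The Koszul homotopy given by division by `x_v` kills all coefficients at monomials in which the
colour `j` occurs, except those where it occurs to the first power and `j ∈ U`. -/
lemma exists_srCoeff_sub_koszulD_of_color (hc : ∀ F ∈ K.faces, Set.InjOn c F)
    {f : Finset ι → SRRing k K} {p : ℕ} (hf : ∀ U, #U = p + 1 → koszulD (colorSum k K c) _ f U = 0)
    (j : ι) : ∃ g : Finset ι → SRRing k K, ∀ U, #U = p → ∀ a : V →₀ ℕ, a.support ∈ K.faces →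
      srCoeff a (f U - koszulD (colorSum k K c) _ g U) =
        if ∀ v ∈ a.support, c v = j → a v = 1 ∧ c v ∈ U then srCoeff a (f U) else 0 := by
  refine ⟨koszulContract j (colorDiv k K c j ∘ f), fun U hU a ha => ?_⟩
  have hhomotopy := koszulD_koszulContract_add (colorSum k K c) (j := j)
    (fun i hij => colorDiv_colorSum_mul hij) f U
  rw [koszulContract_eq_zero (fun W hW => by rw [Function.comp_apply, hf W hW, map_zero]) j hU,
    add_zero] at hhomotopy
  rw [hhomotopy]
  by_cases hj : j ∈ U
  · have hiff : (∀ v ∈ a.support, c v = j → a v = 1 ∧ c v ∈ U) ↔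
        ∀ v ∈ a.support, c v = j → a v = 1 :=
      forall₃_congr fun v _ hv => and_iff_left (hv ▸ hj)
    rw [if_pos hj, map_sub, smul_eq_mul, srCoeff_colorSum_mul_colorDiv hc ha]
    simp only [hiff]
    split_ifs <;> simp
  · have hiff : (∀ v ∈ a.support, c v = j → a v = 1 ∧ c v ∈ U) ↔ ∀ v ∈ a.support, c v ≠ j :=
      forall₃_congr fun v _ => by grind
    rw [if_neg hj, map_sub, smul_eq_mul, srCoeff_colorDiv_colorSum_mul hc ha]
    simp only [hiff]
    split_ifs <;> simp

lemma exists_srCoeff_sub_koszulD (hc : ∀ F ∈ K.faces, Set.InjOn c F)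
    {f : Finset ι → SRRing k K} {p : ℕ} (hf : ∀ U, #U = p + 1 → koszulD (colorSum k K c) _ f U = 0)
    (J : Finset ι) : ∃ g : Finset ι → SRRing k K, ∀ U, #U = p → ∀ a : V →₀ ℕ, a.support ∈ K.faces →
      srCoeff a (f U - koszulD (colorSum k K c) _ g U) =
        if ∀ v ∈ a.support, c v ∈ J → a v = 1 ∧ c v ∈ U then srCoeff a (f U) else 0 := by
  induction J using Finset.induction_on with
  | empty => exact ⟨0, fun U _ a _ => by simp⟩
  | insert j J _ ih =>
    obtain ⟨g, hg⟩ := ih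
    have hcocycle (U : Finset ι) (hU : #U = p + 1) :
        koszulD (colorSum k K c) _ (f - koszulD (colorSum k K c) _ g) U = 0 := by
      rw [map_sub, koszulD_koszulD, sub_zero, hf U hU]
    obtain ⟨h, hh⟩ := exists_srCoeff_sub_koszulD_of_color hc hcocycle j
    refine ⟨g + h, fun U hU a ha => ?_⟩
    rw [map_add, Pi.add_apply, ← sub_sub, ← Pi.sub_apply f, hh U hU a ha, Pi.sub_apply,
      hg U hU a ha, ← ite_and]
    refine if_congr ?_ rfl rfl
    simp only [mem_insert, or_imp, forall_and]
    tauto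

end ColorSum

section Squarefree

variable {V : Type} [DecidableEq V] {k : Type} [Field k] {K : SComplex V}
  {ι : Type*} [LinearOrder ι] {c : V → ι}

/-- The monomial with exponent `a` is squarefree with colours in `U`. -/
def SqfreeIn (c : V → ι) (U : Finset ι) (a : V →₀ ℕ) : Prop :=
  ∀ v ∈ a.support, a v = 1 ∧ c v ∈ U

/-- The incidence numbers induced on the faces avoiding the colours in `S` by the Koszul signs of
their colour sets, after `S` has been added to the latter. -/
def colorSign (c : V → ι) (S : Finset ι) (F : Finset V) (v : V) : ℤˣ :=
  koszulSign (F.image c ∪ S) (c v)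

lemma image_erase_of_injOn {F : Finset V} (hF : Set.InjOn c F) {v : V} (hv : v ∈ F) :
    (F.erase v).image c = (F.image c).erase (c v) := by
  rw [← sdiff_singleton_eq_erase, image_sdiff_of_injOn hF (singleton_subset_iff.mpr hv),
    image_singleton, sdiff_singleton_eq_erase]

lemma erase_image_union {F : Finset V} (hF : Set.InjOn c F) {S : Finset ι}
    (hS : Disjoint (F.image c) S) {v : V} (hv : v ∈ F) :
    (F.image c ∪ S).erase (c v) = (F.erase v).image c ∪ S := by
  rw [erase_union_distrib, image_erase_of_injOn hF hv,
    erase_eq_of_notMem (disjoint_left.mp hS (mem_image_of_mem c hv))]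

omit [DecidableEq V] in
lemma card_image_union {F : Finset V} (hF : Set.InjOn c F) {S : Finset ι}
    (hS : Disjoint (F.image c) S) : #(F.image c ∪ S) = #F + #S := by
  rw [card_union_of_disjoint hS, card_image_of_injOn hF]

omit [DecidableEq V] in
lemma sqfreeIn_sub_single_iff {a : V →₀ ℕ} (ha : Set.InjOn c a.support) {v : V}
    (hv : v ∈ a.support) {U : Finset ι} (hvU : c v ∈ U) :
    SqfreeIn c (U.erase (c v)) (a - Finsupp.single v 1) ↔ SqfreeIn c U a := by
  classical
  have hinj : ∀ w ∈ a.support, c w = c v → w = v := fun w hw h => ha hw hv h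
  unfold SqfreeIn
  simp only [Finsupp.mem_support_iff, Finsupp.tsub_apply, Finsupp.single_apply, mem_erase] at *
  refine forall_congr' fun w => ?_
  grind

omit [DecidableEq V] [LinearOrder ι] in
lemma SqfreeIn.sqfree_support {U : Finset ι} {a : V →₀ ℕ} (h : SqfreeIn c U a) :
    sqfree a.support = a :=
  sqfree_eq_iff.mpr ⟨rfl, fun v hv => (h v hv).1⟩

omit [DecidableEq V] in
lemma SqfreeIn.image_subset {U : Finset ι} {a : V →₀ ℕ} (h : SqfreeIn c U a) :
    a.support.image c ⊆ U :=
  image_subset_iff.mpr fun v hv => (h v hv).2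

/-- The Koszul cochain assembled from simplicial cochains `φ S`, one for each set of colours `S`:
the coefficient of `x_F • e_U` is the value at `F` of `φ S`, where `S` is the set of colours in
`U` that do not occur in `F`. -/
noncomputable def sqfreeLift (K : SComplex V) (c : V → ι) (φ : Finset ι → Finset V → k)
    (U : Finset ι) : SRRing k K :=
  Ideal.Quotient.mk (srIdeal k K)
    (∑ F ∈ K.faces with F.image c ⊆ U, monomial (sqfree F) (φ (U \ F.image c) F))

open scoped Classical in
lemma srCoeff_sqfreeLift {a : V →₀ ℕ} (ha : a.support ∈ K.faces) (φ : Finset ι → Finset V → k)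
    (U : Finset ι) : srCoeff a (sqfreeLift K c φ U) =
      if SqfreeIn c U a then φ (U \ a.support.image c) a.support else 0 := by
  rw [sqfreeLift, srCoeff_mk ha, coeff_sum]
  simp only [coeff_monomial]
  split_ifs with h
  · have hmem : a.support ∈ K.faces.filter fun F => F.image c ⊆ U :=
      mem_filter.mpr ⟨ha, h.image_subset⟩
    rw [sum_eq_single_of_mem _ hmem fun F _ hF => if_neg fun hFa => hF (sqfree_eq_iff.mp hFa).1,
      if_pos h.sqfree_support]
  · refine sum_eq_zero fun F hF => if_neg fun hFa => h fun v hv => ?_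
    obtain ⟨rfl, ha1⟩ := sqfree_eq_iff.mp hFa
    exact ⟨ha1 v hv, (mem_filter.mp hF).2 (mem_image_of_mem c hv)⟩

/-- The simplicial cochain of coefficients of `x_F • e_U` in a Koszul cochain, for `U` the union of
`S` and the colours of `F`. -/
noncomputable def sqfreePart (c : V → ι) (f : Finset ι → SRRing k K) (S : Finset ι)
    (F : Finset V) : k :=
  srCoeff (sqfree F) (f (F.image c ∪ S))

lemma isIncidence_colorSign {S : Finset ι} (hc : ∀ F ∈ K.faces, Set.InjOn c F)
    (hS : ∀ F ∈ K.faces, Disjoint (F.image c) S) : IsIncidence K (colorSign c S) := by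
  intro F hF v hv w hw hvw
  have hcolor (x : V) (hx : x ∈ F) : c x ∈ F.image c ∪ S :=
    mem_union_left _ (mem_image_of_mem c hx)
  unfold colorSign
  rw [← erase_image_union (hc F hF) (hS F hF) hv, ← erase_image_union (hc F hF) (hS F hF) hw]
  exact koszulSign_anticomm (hcolor v hv) (hcolor w hw) fun h => hvw (hc F hF hv hw h)

variable [Fintype V]

lemma koszulD_sqfreeLift (hc : ∀ F ∈ K.faces, Set.InjOn c F) (φ : Finset ι → Finset V → k) :
    koszulD (colorSum k K c) _ (sqfreeLift K c φ) =
      sqfreeLift K c fun S => coboundary (colorSign c S) (φ S) := by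
  classical
  funext U
  refine srCoeff_ext fun a ha => ?_
  have hterm (v : V) (hv : v ∈ a.support.filter (c · ∈ U)) :
      srCoeff (a - Finsupp.single v 1) (sqfreeLift K c φ (U.erase (c v))) =
        if SqfreeIn c U a then φ (U.erase (c v) \ (a - Finsupp.single v 1).support.image c)
          (a - Finsupp.single v 1).support else 0 := by
    rw [srCoeff_sqfreeLift (support_sub_single_mem_faces ha v)]
    obtain ⟨hv, hvU⟩ := mem_filter.mp hv
    exact if_congr (sqfreeIn_sub_single_iff (hc _ ha) hv hvU) rfl rfl
  rw [srCoeff_koszulD ha, srCoeff_sqfreeLift ha, sum_congr rfl fun v hv => by rw [hterm v hv]]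
  split_ifs with h
  · rw [coboundary, filter_true_of_mem fun v hv => (h v hv).2]
    refine sum_congr rfl fun v hv => ?_
    have hsupp : (a - Finsupp.single v 1).support = a.support.erase v := by
      rw [← h.sqfree_support, sqfree_sub_single, support_sqfree, support_sqfree]
    have hsdiff : U.erase (c v) \ (a.support.erase v).image c = U \ a.support.image c := by
      rw [image_erase_of_injOn (hc _ ha) hv, erase_sdiff_comm, sdiff_erase (h v hv).2,
        erase_insert fun hmem => (mem_sdiff.mp hmem).2 (mem_image_of_mem c hv)]
    rw [colorSign, union_sdiff_of_subset h.image_subset, hsupp, hsdiff]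
  · simp

lemma coboundary_sqfreePart (hc : ∀ F ∈ K.faces, Set.InjOn c F) (f : Finset ι → SRRing k K)
    {S : Finset ι} {F : Finset V} (hF : F ∈ K.faces) (hS : Disjoint (F.image c) S) :
    coboundary (colorSign c S) (sqfreePart c f S) F =
      sqfreePart c (koszulD (colorSum k K c) _ f) S F := by
  rw [sqfreePart, srCoeff_sqfree_koszulD hF f subset_union_left, coboundary]
  exact sum_congr rfl fun v hv => by rw [sqfreePart, erase_image_union (hc F hF) hS hv, colorSign]

/-- The subcomplex of the faces without vertices of a colour in `S`. -/
def deleteColors (K : SComplex V) (c : V → ι) (S : Finset ι) : SComplex V :=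
  K.restrict {v | c v ∉ S}

lemma mem_deleteColors {S : Finset ι} {F : Finset V} :
    F ∈ (K.deleteColors c S).faces ↔ F ∈ K.faces ∧ Disjoint (F.image c) S := by
  simp [deleteColors, restrict, subset_iff, disjoint_left]

lemma cochainVanish_of_koszulVanish (hc : ∀ F ∈ K.faces, Set.InjOn c F) {S : Finset ι} {i : ℕ}
    (h : KoszulVanish (colorSum k K c) (SRRing k K) (i + #S)) :
    CochainVanish k (K.deleteColors c S) (colorSign c S) i := by
  classical
  intro φ hφ
  obtain ⟨g, hg⟩ := h (sqfreeLift K c (Pi.single S φ)) fun U hU => srCoeff_ext fun a ha => by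
    rw [koszulD_sqfreeLift hc, srCoeff_sqfreeLift ha, map_zero, ite_eq_right_iff]
    intro hsq
    obtain hS | hS := eq_or_ne (U \ a.support.image c) S
    · subst hS
      rw [Pi.single_eq_same]
      refine hφ _ (mem_deleteColors.mpr ⟨ha, disjoint_sdiff⟩) ?_
      have hcard := card_image_union (hc _ ha) (disjoint_sdiff (s := a.support.image c) (t := U))
      rw [union_sdiff_of_subset hsq.image_subset] at hcard
      omega
    · rw [Pi.single_eq_of_ne hS]
      simp [coboundary]
  refine ⟨sqfreePart c g S, fun F hF hi => ?_⟩
  obtain ⟨hF, hS⟩ := mem_deleteColors.mp hF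
  have hsq : SqfreeIn c (F.image c ∪ S) (sqfree F) := fun v hv => by
    rw [support_sqfree] at hv
    exact ⟨by rw [sqfree_apply, if_pos hv], mem_union_left _ (mem_image_of_mem c hv)⟩
  rw [coboundary_sqfreePart hc g hF hS, sqfreePart,
    hg _ (by rw [card_image_union (hc F hF) hS, hi]), srCoeff_sqfreeLift (by rwa [support_sqfree]),
    if_pos hsq, support_sqfree, union_sdiff_cancel_left hS, Pi.single_eq_same]

lemma exists_coboundary_eq_sqfreePart (hc : ∀ F ∈ K.faces, Set.InjOn c F)
    {f : Finset ι → SRRing k K} {p : ℕ} (hf : ∀ U, #U = p + 1 → koszulD (colorSum k K c) _ f U = 0)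
    {S : Finset ι}
    (h : ∀ i, i + #S = p → CochainVanish k (K.deleteColors c S) (colorSign c S) i) :
    ∃ ψ : Finset V → k, ∀ F ∈ K.faces, Disjoint (F.image c) S → #F + #S = p →
      coboundary (colorSign c S) ψ F = sqfreePart c f S F := by
  obtain hp | hp := lt_or_ge p #S
  · exact ⟨0, fun F _ _ hcard => by omega⟩
  obtain ⟨ψ, hψ⟩ := h (p - #S) (by omega) (sqfreePart c f S) fun F hF hcard => by
    obtain ⟨hF, hS⟩ := mem_deleteColors.mp hF
    rw [coboundary_sqfreePart hc f hF hS, sqfreePart,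
      hf _ (by rw [card_image_union (hc F hF) hS]; omega), map_zero]
  exact ⟨ψ, fun F hF hS hcard => hψ F (mem_deleteColors.mpr ⟨hF, hS⟩) (by omega)⟩

lemma koszulVanish_of_cochainVanish (hc : ∀ F ∈ K.faces, Set.InjOn c F) {p : ℕ}
    (h : ∀ S i, i + #S = p → CochainVanish k (K.deleteColors c S) (colorSign c S) i) :
    KoszulVanish (colorSum k K c) (SRRing k K) p := by
  classical
  intro f hf
  obtain ⟨g, hg⟩ := exists_srCoeff_sub_koszulD hc hf (univ.image c)
  choose ψ hψ using fun S => exists_coboundary_eq_sqfreePart hc hf (h S)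
  refine ⟨g + sqfreeLift K c ψ, fun U hU => srCoeff_ext fun a ha => ?_⟩
  have hpeel : srCoeff a (f U) - srCoeff a (koszulD (colorSum k K c) _ g U) =
      if SqfreeIn c U a then srCoeff a (f U) else 0 := by
    rw [← map_sub, hg U hU a ha]
    exact if_congr (by simp [SqfreeIn]) rfl rfl
  have hlift : srCoeff a (sqfreeLift K c (fun S => coboundary (colorSign c S) (ψ S)) U) =
      if SqfreeIn c U a then srCoeff a (f U) else 0 := by
    rw [srCoeff_sqfreeLift ha]
    refine if_ctx_congr Iff.rfl (fun hsq => ?_) fun _ => rfl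
    have hcard := card_image_union (hc _ ha) (disjoint_sdiff (s := a.support.image c) (t := U))
    rw [union_sdiff_of_subset hsq.image_subset, hU] at hcard
    rw [hψ _ _ ha disjoint_sdiff hcard.symm, sqfreePart, union_sdiff_of_subset hsq.image_subset,
      hsq.sqfree_support]
  rw [map_add, koszulD_sqfreeLift hc, Pi.add_apply, map_add, hlift, ← hpeel, add_sub_cancel]

theorem koszulVanish_iff_hVanish (hc : ∀ F ∈ K.faces, Set.InjOn c F) {p : ℕ} :
    KoszulVanish (colorSum k K c) (SRRing k K) p ↔
      ∀ S i, i + #S = p → HVanish k (K.deleteColors c S) i := by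
  have hsign (S : Finset ι) (i : ℕ) : HVanish k (K.deleteColors c S) i ↔
      CochainVanish k (K.deleteColors c S) (colorSign c S) i := by
    have hincidence : IsIncidence (K.deleteColors c S) (colorSign c S) :=
      isIncidence_colorSign (fun F hF => hc F (mem_deleteColors.mp hF).1)
        fun F hF => (mem_deleteColors.mp hF).2
    rw [hVanish_iff_cochainVanish]
    exact ⟨.of_isIncidence isIncidence_vertexSign hincidence,
      .of_isIncidence hincidence isIncidence_vertexSign⟩
  simp only [hsign]
  refine ⟨?_, koszulVanish_of_cochainVanish hc⟩
  rintro h S i rfl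
  exact cochainVanish_of_koszulVanish hc h

end Squarefree

end SComplex

/-! ### The depth formula -/

lemma depthIn_of_subsingleton (R : Type) [CommRing R] [Subsingleton R] (I : Ideal R) :
    depthIn R I = 0 := by
  have hempty : {n : ℕ | ∃ rs : List R, rs.length = n ∧ (∀ r ∈ rs, r ∈ I) ∧
      RingTheory.Sequence.IsRegular R rs} = ∅ :=
    Set.eq_empty_of_forall_notMem fun _ ⟨_, _, _, h⟩ => h.top_ne_smul (Subsingleton.elim _ _)
  rw [depthIn, hempty, csSup_empty, bot_eq_zero]

namespace SComplex

open MvPolynomial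

section DepthFormula

variable {V : Type} [DecidableEq V] {k : Type} [Field k] {K : SComplex V}

lemma irrelevantIdeal_ne_top (hK : ∅ ∈ K.faces) :
    Ideal.span (Set.range fun v : V => Ideal.Quotient.mk (srIdeal k K) (X v)) ≠ ⊤ := by
  let ε : SRRing k K →+* k := Ideal.Quotient.lift (srIdeal k K) constantCoeff fun p hp =>
    mem_srIdeal_iff.mp hp 0 (by rwa [Finsupp.support_zero])
  refine ne_top_of_le_ne_top (RingHom.ker_ne_top ε) (Ideal.span_le.mpr ?_)
  rintro _ ⟨v, rfl⟩
  exact (Ideal.Quotient.lift_mk ..).trans (constantCoeff_X _ v)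

lemma mk_X_mul_mk_X_eq_zero {v w : V} (hvw : v ≠ w) (h : {v, w} ∉ K.faces) :
    Ideal.Quotient.mk (srIdeal k K) (X v) * Ideal.Quotient.mk (srIdeal k K) (X w) = 0 := by
  rw [← map_mul, Ideal.Quotient.eq_zero_iff_mem]
  exact Ideal.subset_span ⟨{v, w}, h, prod_pair hvw⟩

lemma restrict_congr {W W' : Finset V} (h : ∀ v, {v} ∈ K.faces → (v ∈ W ↔ v ∈ W')) :
    K.restrict W = K.restrict W' := by
  rw [restrict, restrict, SComplex.mk.injEq]
  exact filter_congr fun F hF => forall₂_congr fun v hv =>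
    h v (K.down_closed hF (singleton_subset_iff.mpr hv))

variable [Fintype V] {ι : Type*} [LinearOrder ι] {c : V → ι}

lemma mk_X_mul_colorSum (hc : ∀ F ∈ K.faces, Set.InjOn c F) (v : V) :
    Ideal.Quotient.mk (srIdeal k K) (X v) * colorSum k K c (c v) =
      Ideal.Quotient.mk (srIdeal k K) (X v) ^ 2 := by
  rw [colorSum, mul_sum, sum_eq_single_of_mem v (by simp), sq]
  intro w hw hwv
  exact mk_X_mul_mk_X_eq_zero hwv.symm fun h =>
    hwv (hc _ h (by simp) (by simp) (mem_filter.mp hw).2)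

lemma irrelevantIdeal_le_radical_span_colorSum (hc : ∀ F ∈ K.faces, Set.InjOn c F) :
    Ideal.span (Set.range fun v : V => Ideal.Quotient.mk (srIdeal k K) (X v)) ≤
      (Ideal.span (Set.range (colorSum k K c))).radical := by
  rw [Ideal.span_le]
  rintro _ ⟨v, rfl⟩
  refine ⟨2, ?_⟩
  rw [← mk_X_mul_colorSum hc]
  exact Ideal.mul_mem_left _ _ (Ideal.subset_span ⟨c v, rfl⟩)

lemma hVanish_of_faces_eq_empty (hK : K.faces = ∅) (i : ℕ) : HVanish k K i :=
  hVanish_iff_cochainVanish.mpr fun _ _ => ⟨0, fun F hF => by simp [hK] at hF⟩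

theorem srDepth_eq_sInf_deleteColors [Finite ι] (hc : ∀ F ∈ K.faces, Set.InjOn c F) :
    srDepth k K = sInf {n : ℕ | ∃ (i : ℕ) (S : Finset ι),
      n = i + #S ∧ ¬ HVanish k (K.deleteColors c S) i} := by
  by_cases hK : ∅ ∈ K.faces
  · rw [srDepth, depthIn_eq_sInf_koszulVanish (θ := colorSum k K c) (irrelevantIdeal_ne_top hK)
      (fun j => Ideal.sum_mem _ fun v _ => Ideal.subset_span ⟨v, rfl⟩)
      (irrelevantIdeal_le_radical_span_colorSum hc)]
    congr 1
    ext n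
    simp only [Set.mem_ofPred_eq, koszulVanish_iff_hVanish hc, not_forall, exists_prop]
    rw [exists_comm]
    simp only [eq_comm]
  · have hfaces : K.faces = ∅ := eq_empty_of_forall_notMem fun F hF =>
      hK (K.down_closed hF (empty_subset F))
    have : Subsingleton (SRRing k K) := ⟨fun r s => srCoeff_ext fun a ha => by simp [hfaces] at ha⟩
    rw [srDepth, depthIn_of_subsingleton, eq_comm, Nat.sInf_eq_zero]
    refine Or.inr (Set.eq_empty_of_forall_notMem ?_)
    rintro _ ⟨i, S, -, h⟩
    exact h (hVanish_of_faces_eq_empty (by simp [deleteColors, restrict, hfaces]) i)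

end DepthFormula

section Balanced

variable {V : Type} [DecidableEq V] {K : SComplex V} {ι : Type*} {π : ι → Finset V}

open scoped Classical in
/-- The colouring of the vertices by the parts `π i`, with the extra colour `none` for the elements
of `V` in none of the parts. -/
noncomputable def partColor (π : ι → Finset V) (v : V) : Option ι :=
  if h : ∃ i, v ∈ π i then some h.choose else none

omit [DecidableEq V] in
lemma exists_partColor_eq_some {v : V} (h : ∃ i, v ∈ π i) :
    ∃ i, partColor π v = some i ∧ v ∈ π i :=
  ⟨h.choose, dif_pos h, h.choose_spec⟩

lemma injOn_partColor (hcover : ∀ v : V, {v} ∈ K.faces → ∃ i, v ∈ π i)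
    (hbal : ∀ F ∈ K.faces, ∀ i, #(F ∩ π i) ≤ 1) :
    ∀ F ∈ K.faces, Set.InjOn (partColor π) F := by
  intro F hF v hv w hw hvw
  have hcolor (u : V) (hu : u ∈ F) : ∃ i, partColor π u = some i ∧ u ∈ π i :=
    exists_partColor_eq_some (hcover u (K.down_closed hF (singleton_subset_iff.mpr hu)))
  obtain ⟨i, hi, hvi⟩ := hcolor v hv
  obtain ⟨j, hj, hwj⟩ := hcolor w hw
  obtain rfl : i = j := Option.some_injective _ (hi.symm.trans (hvw.trans hj))
  exact card_le_one.mp (hbal F hF i) v (mem_inter.mpr ⟨hv, hvi⟩) w (mem_inter.mpr ⟨hw, hwj⟩)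

lemma deleteColors_partColor [Fintype V] [Fintype ι] [DecidableEq ι] [LinearOrder (Option ι)]
    (hdisj : ∀ i j, i ≠ j → Disjoint (π i) (π j))
    (hcover : ∀ v : V, {v} ∈ K.faces → ∃ i, v ∈ π i) (T : Finset (Option ι)) :
    K.deleteColors (partColor π) T = K.restrict ((eraseNone T)ᶜ.biUnion π) := by
  refine restrict_congr fun v hv => ?_
  obtain ⟨i, hi, hvi⟩ := exists_partColor_eq_some (hcover v hv)
  simp only [mem_filter, mem_univ, true_and, mem_biUnion, mem_compl, mem_eraseNone, hi]
  refine ⟨fun h => ⟨i, h, hvi⟩, fun ⟨j, hj, hvj⟩ => ?_⟩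
  obtain rfl : i = j := by_contra fun hij => disjoint_left.mp (hdisj i j hij) hvi hvj
  exact hj

end Balanced

end SComplex

theorem balanced_depth_formula_general {V : Type} [DecidableEq V] [Fintype V] (k : Type) [Field k]
    (K : SComplex V) {ι : Type*} [Fintype ι] [DecidableEq ι] (π : ι → Finset V)
    (hdisj : ∀ i j : ι, i ≠ j → Disjoint (π i) (π j))
    (hcover : ∀ v : V, {v} ∈ K.faces → ∃ i, v ∈ π i)
    (hbal : ∀ F ∈ K.faces, ∀ i : ι, #(F ∩ π i) ≤ 1) :
    SComplex.srDepth k K = sInf {n : ℕ | ∃ (i : ℕ) (S : Finset ι),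
      n = i + #S ∧ ¬ SComplex.HVanish k (K.restrict (Sᶜ.biUnion π)) i} := by
  let _ : LinearOrder (Option ι) := LinearOrder.lift' (Fintype.equivFin _) (Equiv.injective _)
  rw [SComplex.srDepth_eq_sInf_deleteColors (SComplex.injOn_partColor hcover hbal)]
  simp only [SComplex.deleteColors_partColor hdisj hcover]
  refine csInf_eq_csInf_of_forall_exists_le ?_ ?_
  · rintro _ ⟨i, T, rfl, hT⟩
    exact ⟨_, ⟨i, eraseNone T, rfl, hT⟩, Nat.add_le_add_left (card_eraseNone_le ..) i⟩
  · rintro _ ⟨i, S, rfl, hS⟩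
    refine ⟨_, ⟨i, S.map .some, rfl, ?_⟩, by rw [card_map]⟩
    rwa [eraseNone_map_some]

/-- For a balanced simplicial complex `(Δ, π)` of dimension `d - 1`,
`depth k[Δ] = min { i + |S| : S ⊆ [d], H̃_{i-1}(Δ_{[d]-S}; k) ≠ 0 }`. -/
theorem balanced_depth_formula {V : Type} [DecidableEq V] [Fintype V] (k : Type) [Field k]
    (K : SComplex V) (d : ℕ) (π : Fin d → Finset V)
    (hrank : K.rank = d)
    (hdisj : ∀ i j : Fin d, i ≠ j → Disjoint (π i) (π j))
    (hcover : ∀ v : V, ({v} : Finset V) ∈ K.faces ↔ ∃ i, v ∈ π i)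
    (hbal : ∀ F ∈ K.faces, ∀ i : Fin d, (F ∩ π i).card ≤ 1)
    :
    SComplex.srDepth k K = sInf {n : ℕ | ∃ (i : ℕ) (S : Finset (Fin d)),
      n = i + S.card ∧ ¬ SComplex.HVanish k (K.restrict (Sᶜ.biUnion π)) i} :=
  balanced_depth_formula_general k K π hdisj (fun v => (hcover v).mp) hbal
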